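/- The infimum of v(G,w) over all instances (G,w) of the concurrent graph sharing game equals 1/3. -/

import Mathlib

/-!
Formalization of the concurrent graph sharing game.

An instance is a finite connected simple graph `G` on a finite vertex type `V`
together with vertex weights `w : V → (0,1]` summing to `1`, such that no two
distinct subsets of vertices have the same total weight.

A game history is recorded as a list of the taken vertices, **most recent
first**.  The player-to-move at a history is determined by the history itself:
the first player (1st) moves when his collected weight so far is at most that
of the second player (2nd); by the distinct-subset-sums assumption a tie occurs
only at the empty history, where indeed 1st begins.  `scores w h` computes the
pair `(w(F), w(S))` of total weights collected by 1st and 2nd along a history.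

A strategy is a function from histories to the chosen next vertex; it is legal
if, whenever some legal move exists (a non-taken vertex that is adjacent to a
taken one, or any vertex at the very beginning), it produces a legal move.
`firstScore w σ τ` is the total weight collected by 1st after the complete play
(all `Fintype.card V` vertices taken) in which 1st uses `σ` and 2nd uses `τ`.

`FirstGuarantees G w c` says that 1st has a legal strategy guaranteeing that he
collects total weight at least `c` against every legal strategy of 2nd, and the
value `gameValue G w` is the supremum of all such guarantees `c`.
-/

namespace ConcurrentSharing

variable {V : Type} [Fintype V]

/-- The pair `(w(F), w(S))` of weights collected by the two players along a
history (most recent vertex first): each vertex is assigned to the player who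
was to move, namely 1st iff his score so far is at most 2nd's score. -/
noncomputable def scores (w : V → ℝ) : List V → ℝ × ℝ
  | [] => (0, 0)
  | v :: h =>
    let p := scores w h
    if p.1 ≤ p.2 then (p.1 + w v, p.2) else (p.1, p.2 + w v)

/-- `v` is a legal next move at history `h`: it is not yet taken, and it is
adjacent to some taken vertex (any vertex is legal at the start). -/
def LegalMove (G : SimpleGraph V) (h : List V) (v : V) : Prop :=
  v ∉ h ∧ (h = [] ∨ ∃ u ∈ h, G.Adj u v)

/-- A strategy (for either player) maps histories to vertices; it is legal if
it produces a legal move whenever a legal move exists. -/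
def LegalStrategy (G : SimpleGraph V) (σ : List V → V) : Prop :=
  ∀ h : List V, (∃ v, LegalMove G h v) → LegalMove G h (σ h)

/-- The history after `n` rounds when 1st plays `σ` and 2nd plays `τ`
(the player to move is the one whose collected weight so far is smaller;
at the start, i.e. on a tie, 1st moves). -/
noncomputable def playAux (w : V → ℝ) (σ τ : List V → V) : ℕ → List V
  | 0 => []
  | n + 1 =>
    let h := playAux w σ τ n
    (if (scores w h).1 ≤ (scores w h).2 then σ h else τ h) :: h

/-- The total weight `w(F)` collected by 1st at the end of the complete play
(all vertices taken) in which 1st plays `σ` and 2nd plays `τ`. -/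
noncomputable def firstScore (w : V → ℝ) (σ τ : List V → V) : ℝ :=
  (scores w (playAux w σ τ (Fintype.card V))).1

/-- 1st has a legal strategy collecting total weight at least `c` against
every legal strategy of 2nd. -/
def FirstGuarantees (G : SimpleGraph V) (w : V → ℝ) (c : ℝ) : Prop :=
  ∃ σ : List V → V, LegalStrategy G σ ∧
    ∀ τ : List V → V, LegalStrategy G τ → c ≤ firstScore w σ τ

/-- The value `v(G,w)`: the maximum total weight 1st can guarantee. -/
noncomputable def gameValue (G : SimpleGraph V) (w : V → ℝ) : ℝ :=
  sSup {c : ℝ | FirstGuarantees G w c}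

/-- `(G, w)` is an instance of the concurrent graph sharing game: `G` is
connected, the weights lie in `(0,1]` and sum to `1`, and no two distinct
subsets of vertices have the same total weight. -/
def IsGameInstance (G : SimpleGraph V) (w : V → ℝ) : Prop :=
  G.Connected ∧ (∀ v : V, 0 < w v ∧ w v ≤ 1) ∧ (∑ v : V, w v) = 1 ∧
    ∀ A B : Finset V, A ≠ B → ∑ a ∈ A, w a ≠ ∑ b ∈ B, w b

end ConcurrentSharing

namespace ConcurrentSharing

/-!
If 1st starts with a heaviest vertex `v`, then `w v ≤ w(F)`, and since 2nd moves only while behind,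
`w(S) ≤ w(F) + w v ≤ 2 * w(F)`. Hence 1st secures a third of the total weight.

Conversely, give three vertices of a 7-cycle weight `1` and perturb the weights of all vertices by
multiples of `ε`. When `ε` is small, sets of vertices are compared lexicographically, first by the
number of heavy vertices and then by the coefficient of `ε`, so the course of a play does not depend
on `ε`. For suitable coefficients, a finite check shows that 2nd always gets two of the three heavy
vertices, and as `ε` tends to `0` the share of 1st is at most `1 / 3` in the limit.
-/

section Play

variable {V : Type} {w : V → ℝ} {σ τ : List V → V}

theorem length_playAux (w : V → ℝ) (σ τ : List V → V) (n : ℕ) :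
    (playAux w σ τ n).length = n := by
  induction n with
  | zero => rfl
  | succ n ih => rw [playAux, List.length_cons, ih]

theorem scores_fst_add_snd (w : V → ℝ) (h : List V) :
    (scores w h).1 + (scores w h).2 = (h.map w).sum := by
  induction h with
  | nil => simp [scores]
  | cons v h ih =>
    rw [scores, List.map_cons, List.sum_cons, ← ih]
    split_ifs <;> ring

theorem scores_nonneg (hw : ∀ v, 0 ≤ w v) (h : List V) : 0 ≤ scores w h := by
  induction h with
  | nil => rfl
  | cons v h ih =>
    rw [scores]
    split_ifs
    · exact ⟨add_nonneg ih.1 (hw v), ih.2⟩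
    · exact ⟨ih.1, add_nonneg ih.2 (hw v)⟩

theorem scores_fst_le_cons (hw : ∀ v, 0 ≤ w v) (v : V) (h : List V) :
    (scores w h).1 ≤ (scores w (v :: h)).1 := by
  rw [scores]
  split_ifs
  · exact le_add_of_nonneg_right (hw v)
  · exact le_rfl

theorem scores_snd_le_fst_add {M : ℝ} (hw : ∀ v, 0 ≤ w v) (hM : 0 ≤ M) (hwM : ∀ v, w v ≤ M)
    (h : List V) : (scores w h).2 ≤ (scores w h).1 + M := by
  induction h with
  | nil => simpa [scores] using hM
  | cons v h ih =>
    rw [scores]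
    split_ifs with first_moves
    · linarith [hw v]
    · linarith [hwM v]

theorem start_le_scores_playAux (hw : ∀ v, 0 ≤ w v) (σ τ : List V → V) (n : ℕ) :
    w (σ []) ≤ (scores w (playAux w σ τ (n + 1))).1 := by
  induction n with
  | zero => simp [playAux, scores]
  | succ n ih => exact ih.trans (scores_fst_le_cons hw _ _)

variable [Fintype V] {G : SimpleGraph V}

theorem exists_legalMove (hG : G.Connected) {h : List V} (hh : h.length < Fintype.card V) :
    ∃ v, LegalMove G h v := by
  classical
  obtain ⟨u, hu⟩ : ∃ u, u ∉ h := by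
    by_contra! all_taken
    have huniv : h.toFinset = Finset.univ := by simpa [Finset.eq_univ_iff_forall] using all_taken
    exact hh.not_ge <| by simpa [huniv] using h.toFinset_card_le
  cases h with
  | nil => exact ⟨u, hu, .inl rfl⟩
  | cons a t =>
    obtain ⟨walk⟩ := hG.preconnected a u
    obtain ⟨d, -, d_taken, d_free⟩ := walk.exists_boundary_dart {x | x ∈ a :: t} (by simp) hu
    exact ⟨d.snd, d_free, .inr ⟨d.fst, d_taken, d.adj⟩⟩

theorem nodup_playAux (hG : G.Connected) (w : V → ℝ) (hσ : LegalStrategy G σ)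
    (hτ : LegalStrategy G τ) {n : ℕ} (hn : n ≤ Fintype.card V) : (playAux w σ τ n).Nodup := by
  induction n with
  | zero => exact List.nodup_nil
  | succ n ih =>
    have hex := exists_legalMove hG ((length_playAux w σ τ n).trans_lt hn)
    refine List.nodup_cons.2 ⟨?_, ih (Nat.le_of_succ_le hn)⟩
    split_ifs
    · exact (hσ _ hex).1
    · exact (hτ _ hex).1

theorem firstScore_add_scores_snd (hG : G.Connected) (w : V → ℝ) (hσ : LegalStrategy G σ)
    (hτ : LegalStrategy G τ) :
    firstScore w σ τ + (scores w (playAux w σ τ (Fintype.card V))).2 = ∑ v, w v := by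
  classical
  have hnodup := nodup_playAux hG w hσ hτ le_rfl
  have huniv : (playAux w σ τ (Fintype.card V)).toFinset = Finset.univ := by
    rw [← Finset.card_eq_iff_eq_univ, List.toFinset_card_of_nodup hnodup, length_playAux]
  rw [firstScore, scores_fst_add_snd, ← List.sum_toFinset w hnodup, huniv]

theorem firstScore_le_sum (hG : G.Connected) (hw : ∀ v, 0 ≤ w v) (hσ : LegalStrategy G σ)
    (hτ : LegalStrategy G τ) : firstScore w σ τ ≤ ∑ v, w v := by
  rw [← firstScore_add_scores_snd hG w hσ hτ]
  exact le_add_of_nonneg_right (scores_nonneg hw _).2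

theorem sum_le_three_mul_firstScore (hG : G.Connected) (hw : ∀ v, 0 ≤ w v)
    (hσ : LegalStrategy G σ) (hτ : LegalStrategy G τ) (heaviest : ∀ v, w v ≤ w (σ [])) :
    ∑ v, w v ≤ 3 * firstScore w σ τ := by
  have hstart : w (σ []) ≤ firstScore w σ τ := by
    have := hG.nonempty
    obtain ⟨n, hn⟩ := Nat.exists_eq_succ_of_ne_zero (Fintype.card_ne_zero (α := V))
    rw [firstScore, hn]
    exact start_le_scores_playAux hw σ τ n
  have hlead := scores_snd_le_fst_add hw (hw _) heaviest (playAux w σ τ (Fintype.card V))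
  have hsum := firstScore_add_scores_snd hG w hσ hτ
  rw [← firstScore] at hlead
  linarith

end Play

section PriorityStrategy

variable {V : Type} [DecidableEq V] {G : SimpleGraph V} [DecidableRel G.Adj]

instance (h : List V) (v : V) : Decidable (LegalMove G h v) :=
  inferInstanceAs (Decidable (_ ∧ _))

/-- The strategy taking the first legal vertex of the list `order h`; the value `v₀` is only
returned when there is none. -/
def priorityStrategy (G : SimpleGraph V) [DecidableRel G.Adj] (order : List V → List V) (v₀ : V)
    (h : List V) : V :=
  ((order h).find? (LegalMove G h ·)).getD v₀

theorem legalStrategy_priorityStrategy {order : List V → List V} (horder : ∀ h v, v ∈ order h)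
    (v₀ : V) : LegalStrategy G (priorityStrategy G order v₀) := by
  rintro h ⟨v, hv⟩
  obtain ⟨u, hu⟩ : ∃ u, (order h).find? (LegalMove G h ·) = some u := by
    rw [← Option.isSome_iff_exists, List.find?_isSome]
    exact ⟨v, horder h v, by simpa using hv⟩
  rw [priorityStrategy, hu, Option.getD_some]
  simpa using List.find?_some hu

end PriorityStrategy

section Value

theorem exists_legalStrategy_start {V : Type} [Finite V] (G : SimpleGraph V) (v : V) :
    ∃ σ, LegalStrategy G σ ∧ σ [] = v := by
  classical
  have := Fintype.ofFinite V
  refine ⟨priorityStrategy G (fun _ ↦ v :: Finset.univ.toList) v,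
    legalStrategy_priorityStrategy (by simp) v, ?_⟩
  simp [priorityStrategy, LegalMove]

variable {V : Type} [Fintype V] {G : SimpleGraph V} {w : V → ℝ}

theorem le_gameValue (hG : G.Connected) (hw : ∀ v, 0 ≤ w v) {r : ℝ}
    (hr : FirstGuarantees G w r) : r ≤ gameValue G w := by
  refine le_csSup ⟨∑ v, w v, ?_⟩ hr
  rintro c ⟨σ, hσ, hc⟩
  exact (hc σ hσ).trans (firstScore_le_sum hG hw hσ hσ)

theorem gameValue_le {r : ℝ} (hr : 0 ≤ r) {τ : List V → V} (hτ : LegalStrategy G τ)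
    (hle : ∀ σ, LegalStrategy G σ → firstScore w σ τ ≤ r) : gameValue G w ≤ r := by
  refine Real.sSup_le ?_ hr
  rintro c ⟨σ, hσ, hc⟩
  exact (hc τ hτ).trans (hle σ hσ)

theorem one_third_le_gameValue (hGw : IsGameInstance G w) : 1 / 3 ≤ gameValue G w := by
  obtain ⟨hG, hw, hsum, -⟩ := hGw
  have hw₀ : ∀ v, 0 ≤ w v := fun v ↦ (hw v).1.le
  have := hG.nonempty
  obtain ⟨v, hv⟩ := Finite.exists_max w
  obtain ⟨σ, hσ, rfl⟩ := exists_legalStrategy_start G v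
  refine le_gameValue hG hw₀ ⟨σ, hσ, fun τ hτ ↦ ?_⟩
  linarith [sum_le_three_mul_firstScore hG hw₀ hσ hτ hv]

end Value

section Shares

variable {V : Type} {M : Type*} [DecidableEq V] [AddCommMonoid M] [LE M] [DecidableLE M]

/-- The sets `(F, S)` of vertices taken by 1st and 2nd along a history, for weights in an arbitrary
ordered monoid. -/
def shares (c : V → M) : List V → Finset V × Finset V
  | [] => (∅, ∅)
  | v :: h =>
    let p := shares c h
    if ∑ u ∈ p.1, c u ≤ ∑ u ∈ p.2, c u then (insert v p.1, p.2) else (p.1, insert v p.2)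

/-- Whether 1st is to move at the history `h`, for weights in an arbitrary ordered monoid. -/
abbrev FirstToMove (c : V → M) (h : List V) : Prop :=
  ∑ u ∈ (shares c h).1, c u ≤ ∑ u ∈ (shares c h).2, c u

theorem shares_le (c : V → M) (h : List V) : shares c h ≤ (h.toFinset, h.toFinset) := by
  induction h with
  | nil => exact le_rfl
  | cons v h ih =>
    rw [shares, List.toFinset_cons]
    split_ifs
    · exact ⟨Finset.insert_subset_insert v ih.1, ih.2.trans (Finset.subset_insert v _)⟩
    · exact ⟨ih.1.trans (Finset.subset_insert v _), Finset.insert_subset_insert v ih.2⟩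

theorem scores_eq_sum_shares (w : V → ℝ) {h : List V} (hh : h.Nodup) :
    scores w h = (∑ u ∈ (shares w h).1, w u, ∑ u ∈ (shares w h).2, w u) := by
  induction h with
  | nil => simp [scores, shares]
  | cons v h ih =>
    obtain ⟨hv, hh⟩ := List.nodup_cons.1 hh
    have hvF : v ∉ (shares w h).1 := fun hmem ↦ hv (List.mem_toFinset.1 ((shares_le w h).1 hmem))
    have hvS : v ∉ (shares w h).2 := fun hmem ↦ hv (List.mem_toFinset.1 ((shares_le w h).2 hmem))
    simp only [scores, shares, ih hh]
    split_ifs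
    · rw [Finset.sum_insert hvF, add_comm]
    · rw [Finset.sum_insert hvS, add_comm (w v)]

/-- The weights `w` and `c` rank all sets of vertices in the same order, so that they give rise to
the same plays. -/
def SameSubsetOrder {N : Type*} [AddCommMonoid N] [LE N] (w : V → N) (c : V → M) : Prop :=
  ∀ A B : Finset V, ∑ v ∈ A, w v ≤ ∑ v ∈ B, w v ↔ ∑ v ∈ A, c v ≤ ∑ v ∈ B, c v

theorem SameSubsetOrder.shares_eq {N : Type*} [AddCommMonoid N] [LE N] [DecidableLE N] {w : V → N}
    {c : V → M} (hwc : SameSubsetOrder w c) (h : List V) : shares w h = shares c h := by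
  induction h with
  | nil => rfl
  | cons v h ih => simp only [shares, ih, hwc _ _]

theorem SameSubsetOrder.scores_eq {w : V → ℝ} {c : V → M} (hwc : SameSubsetOrder w c)
    {h : List V} (hh : h.Nodup) :
    scores w h = (∑ u ∈ (shares c h).1, w u, ∑ u ∈ (shares c h).2, w u) := by
  rw [scores_eq_sum_shares w hh, hwc.shares_eq]

end Shares

section Forces

variable {V : Type} {M : Type*} [DecidableEq V] [AddCommMonoid M] [LE M] [DecidableLE M]

/-- If 2nd plays `τ` from the history `h` on, then `Q` holds after `k` more rounds, whatever legal
moves 1st makes. -/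
def Forces (G : SimpleGraph V) (c : V → M) (τ : List V → V) (Q : List V → Prop) :
    ℕ → List V → Prop
  | 0, h => Q h
  | k + 1, h =>
    if FirstToMove c h then ∀ v, LegalMove G h v → Forces G c τ Q k (v :: h)
    else Forces G c τ Q k (τ h :: h)

instance Forces.decidable [Fintype V] (G : SimpleGraph V) [DecidableRel G.Adj] (c : V → M)
    (τ : List V → V) (Q : List V → Prop) [DecidablePred Q] :
    ∀ k h, Decidable (Forces G c τ Q k h)
  | 0, h => inferInstanceAs (Decidable (Q h))
  | k + 1, h =>
    have := Forces.decidable G c τ Q k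
    inferInstanceAs (Decidable (if FirstToMove c h then _ else _))

variable [Fintype V] {G : SimpleGraph V} {w : V → ℝ} {c : V → M} {σ τ : List V → V}
  {Q : List V → Prop}

theorem Forces.playAux_add (hG : G.Connected) (hwc : SameSubsetOrder w c)
    (hσ : LegalStrategy G σ) (hτ : LegalStrategy G τ) {k n : ℕ} (hnk : n + k ≤ Fintype.card V)
    (hforces : Forces G c τ Q k (playAux w σ τ n)) : Q (playAux w σ τ (n + k)) := by
  induction k generalizing n with
  | zero => exact hforces
  | succ k ih =>
    have hn : n < Fintype.card V := by lia
    have hex := exists_legalMove hG ((length_playAux w σ τ n).trans_lt hn)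
    have hscores := hwc.scores_eq (nodup_playAux hG w hσ hτ hn.le)
    rw [← Nat.succ_add_eq_add_succ]
    refine ih (by lia) ?_
    rw [Forces] at hforces
    simp only [playAux, hscores, hwc _ _]
    split_ifs at hforces ⊢
    · exact hforces _ (hσ _ hex)
    · exact hforces

theorem Forces.playAux_card (hG : G.Connected) (hwc : SameSubsetOrder w c)
    (hσ : LegalStrategy G σ) (hτ : LegalStrategy G τ)
    (hforces : Forces G c τ Q (Fintype.card V) []) : Q (playAux w σ τ (Fintype.card V)) := by
  simpa only [Nat.zero_add] using playAux_add (n := 0) hG hwc hσ hτ (Nat.zero_add _).le hforces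

end Forces

section PerturbedWeight

theorem add_mul_le_add_mul_iff_toLex_le {ε : ℝ} (hε : 0 < ε) {a b c d : ℕ} (hb : ε * b < 1)
    (hd : ε * d < 1) : (a + ε * b : ℝ) ≤ c + ε * d ↔ toLex (a, b) ≤ toLex (c, d) := by
  have hmono : StrictMonoOn (fun x : ℕ ×ₗ ℕ ↦ ((ofLex x).1 + ε * (ofLex x).2 : ℝ))
      {x | ε * (ofLex x).2 < 1} := by
    intro x hx y _ hxy
    rcases Prod.Lex.lt_iff.1 hxy with hfst | ⟨hfst, hsnd⟩
    · calc ((ofLex x).1 + ε * (ofLex x).2 : ℝ) < (ofLex x).1 + 1 := by gcongr; exact hx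
        _ ≤ (ofLex y).1 := by exact_mod_cast hfst
        _ ≤ (ofLex y).1 + ε * (ofLex y).2 := le_add_of_nonneg_right (by positivity)
    · simp only [hfst]
      gcongr
  exact hmono.le_iff_le (a := toLex (a, b)) (b := toLex (c, d)) hb hd

variable {V : Type} {heavy light : V → ℕ}

/-- The weight `heavy v + ε * light v` for an infinitesimal `ε`. -/
def lexWeight (heavy light : V → ℕ) (v : V) : ℕ ×ₗ ℕ :=
  toLex (heavy v, light v)

theorem sum_lexWeight (heavy light : V → ℕ) (A : Finset V) :
    ∑ v ∈ A, lexWeight heavy light v = toLex (∑ v ∈ A, heavy v, ∑ v ∈ A, light v) :=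
  Prod.ext Prod.fst_sum Prod.snd_sum

variable [Fintype V] {ε : ℝ}

/-- The weight `heavy v + ε * light v` for a real number `ε`, normalised to total weight `1`. -/
noncomputable def perturbedWeight (heavy light : V → ℕ) (ε : ℝ) (v : V) : ℝ :=
  (heavy v + ε * light v) / (∑ u, heavy u + ε * ∑ u, light u)

theorem sum_perturbedWeight (heavy light : V → ℕ) (ε : ℝ) (A : Finset V) :
    ∑ v ∈ A, perturbedWeight heavy light ε v =
      (∑ v ∈ A, heavy v + ε * ∑ v ∈ A, light v) / (∑ u, heavy u + ε * ∑ u, light u) := by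
  simp only [perturbedWeight, ← Finset.sum_div, Finset.sum_add_distrib, ← Finset.mul_sum,
    Nat.cast_sum]

theorem total_perturbedWeight_pos (hheavy : 0 < ∑ v, heavy v) (light : V → ℕ) (hε : 0 < ε) :
    (0 : ℝ) < ∑ v, heavy v + ε * ∑ v, light v :=
  add_pos_of_pos_of_nonneg (Nat.cast_pos.2 hheavy) (by positivity)

theorem sameSubsetOrder_perturbedWeight (hheavy : 0 < ∑ v, heavy v) (hε : 0 < ε)
    (hlight : ε * ∑ v, light v < 1) :
    SameSubsetOrder (perturbedWeight heavy light ε) (lexWeight heavy light) := by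
  have hsmall (A : Finset V) : ε * ↑(∑ v ∈ A, light v) < 1 := by
    refine lt_of_le_of_lt ?_ hlight
    gcongr
    exact Finset.subset_univ A
  intro A B
  rw [sum_perturbedWeight, sum_perturbedWeight,
    div_le_div_iff_of_pos_right (total_perturbedWeight_pos hheavy light hε), sum_lexWeight,
    sum_lexWeight, add_mul_le_add_mul_iff_toLex_le hε (hsmall A) (hsmall B)]

theorem perturbedWeight_pos (hheavy : 0 < ∑ v, heavy v) (hε : 0 < ε) {v : V}
    (hv : 0 < heavy v + light v) : 0 < perturbedWeight heavy light ε v := by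
  refine div_pos ?_ (total_perturbedWeight_pos hheavy light hε)
  rcases Nat.add_pos_iff_pos_or_pos.1 hv with hv | hv <;> positivity

variable {G : SimpleGraph V}

theorem isGameInstance_perturbedWeight (hG : G.Connected) (hpos : ∀ v, 0 < heavy v + light v)
    (hinj : Function.Injective fun A : Finset V ↦ ∑ v ∈ A, lexWeight heavy light v)
    (hheavy : 0 < ∑ v, heavy v) (hε : 0 < ε) (hlight : ε * ∑ v, light v < 1) :
    IsGameInstance G (perturbedWeight heavy light ε) := by
  have hw v : 0 < perturbedWeight heavy light ε v := perturbedWeight_pos hheavy hε (hpos v)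
  have hsum : ∑ v, perturbedWeight heavy light ε v = 1 := by
    rw [sum_perturbedWeight, div_self (total_perturbedWeight_pos hheavy light hε).ne']
  refine ⟨hG, fun v ↦ ⟨hw v, hsum ▸ ?_⟩, hsum, fun A B hAB hsums ↦ hAB (hinj ?_)⟩
  · exact Finset.single_le_sum (fun u _ ↦ (hw u).le) (Finset.mem_univ v)
  · have hwc := sameSubsetOrder_perturbedWeight hheavy hε hlight
    exact le_antisymm ((hwc A B).1 hsums.le) ((hwc B A).1 hsums.ge)

theorem gameValue_perturbedWeight_le [DecidableEq V] (hG : G.Connected)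
    (hheavy : 0 < ∑ v, heavy v) (hε : 0 < ε) (hlight : ε * ∑ v, light v < 1) {τ : List V → V}
    (hτ : LegalStrategy G τ) {k : ℕ}
    (hforces : Forces G (lexWeight heavy light) τ
      (fun h ↦ ∑ v ∈ (shares (lexWeight heavy light) h).1, heavy v ≤ k) (Fintype.card V) []) :
    gameValue G (perturbedWeight heavy light ε) ≤ (k + ε * ∑ v, light v) / ∑ v, heavy v := by
  refine gameValue_le (by positivity) hτ fun σ hσ ↦ ?_
  have hwc := sameSubsetOrder_perturbedWeight hheavy hε hlight
  have hnodup := nodup_playAux hG (perturbedWeight heavy light ε) hσ hτ le_rfl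
  have hfirst : ∑ v ∈ (shares (lexWeight heavy light) (playAux _ σ τ _)).1, heavy v ≤ k :=
    hforces.playAux_card hG hwc hσ hτ
  have : (0 : ℝ) < ↑(∑ v, heavy v) := Nat.cast_pos.2 hheavy
  rw [firstScore, hwc.scores_eq hnodup, sum_perturbedWeight]
  dsimp only
  gcongr
  · exact Finset.subset_univ _
  · exact le_add_of_nonneg_right (by positivity)

end PerturbedWeight

section SevenCycle

/-- The leading parts of the weights of the extremal 7-cycle. -/
def cycleHeavy : Fin 7 → ℕ := ![1, 1, 0, 1, 0, 0, 0]

/-- The coefficients of `ε` in the weights of the extremal 7-cycle, found by computer search. -/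
def cycleLight : Fin 7 → ℕ := ![2, 0, 20, 24, 16, 10, 5]

/-- The preferences of 2nd on the extremal 7-cycle. They depend only on the starting vertex, which
is the last entry of a history. -/
def secondOrder (h : List (Fin 7)) : List (Fin 7) :=
  if h.getLastD 0 ∈ [2, 4, 5] then [0, 1, 3, 4, 5, 6, 2] else [6, 5, 0, 1, 3, 2, 4]

theorem mem_secondOrder (h : List (Fin 7)) (v : Fin 7) : v ∈ secondOrder h := by
  rw [secondOrder]
  split_ifs <;> decide +revert

theorem secondOrder_forces_heavy_le_one :
    Forces (SimpleGraph.cycleGraph 7) (lexWeight cycleHeavy cycleLight)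
      (priorityStrategy (SimpleGraph.cycleGraph 7) secondOrder 0)
      (fun h ↦ ∑ v ∈ (shares (lexWeight cycleHeavy cycleLight) h).1, cycleHeavy v ≤ 1) 7 [] := by
  decide +kernel

theorem injective_sum_lexWeight_cycle :
    Function.Injective fun A ↦ ∑ v ∈ A, lexWeight cycleHeavy cycleLight v := by
  decide +kernel

theorem exists_gameValue_le_one_third_add {δ : ℝ} (hδ : 0 < δ) :
    ∃ w, IsGameInstance (SimpleGraph.cycleGraph 7) w ∧
      gameValue (SimpleGraph.cycleGraph 7) w ≤ 1 / 3 + δ := by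
  have hG : (SimpleGraph.cycleGraph 7).Connected := SimpleGraph.cycleGraph_connected
  have hheavy : ∑ v, cycleHeavy v = 3 := by decide
  have hlight : ∑ v, cycleLight v = 77 := by decide
  obtain ⟨ε, hε, hεδ⟩ : ∃ ε : ℝ, 0 < ε ∧ ε < min (1 / 77) (δ / 77) :=
    exists_between (by positivity)
  have hsmall : ε * ↑(∑ v, cycleLight v) < 1 := by
    rw [hlight, Nat.cast_ofNat]
    linarith [hεδ.trans_le (min_le_left _ _)]
  have hpos : 0 < ∑ v, cycleHeavy v := by lia
  refine ⟨perturbedWeight cycleHeavy cycleLight ε, isGameInstance_perturbedWeight hG (by decide)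
    injective_sum_lexWeight_cycle hpos hε hsmall, ?_⟩
  refine (gameValue_perturbedWeight_le hG hpos hε hsmall
    (legalStrategy_priorityStrategy mem_secondOrder 0) secondOrder_forces_heavy_le_one).trans ?_
  rw [hheavy, hlight]
  push_cast
  linarith [hεδ.trans_le (min_le_right _ _)]

end SevenCycle

end ConcurrentSharing

open ConcurrentSharing in
/-- The infimum of `v(G,w)` over all instances `(G,w)` of the
concurrent graph sharing game equals `1/3`. -/
theorem inf_gameValue_eq_one_third :
    sInf {r : ℝ | ∃ (n : ℕ) (G : SimpleGraph (Fin n)) (w : Fin n → ℝ),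
        IsGameInstance G w ∧ r = gameValue G w} = 1 / 3 := by
  set values : Set ℝ := {r | ∃ (n : ℕ) (G : SimpleGraph (Fin n)) (w : Fin n → ℝ),
    IsGameInstance G w ∧ r = gameValue G w}
  have lower : 1 / 3 ∈ lowerBounds values := by
    rintro _ ⟨n, G, w, hGw, rfl⟩
    exact one_third_le_gameValue hGw
  have near (δ : ℝ) (hδ : 0 < δ) : ∃ r ∈ values, r ≤ 1 / 3 + δ := by
    obtain ⟨w, hGw, hle⟩ := exists_gameValue_le_one_third_add hδ
    exact ⟨_, ⟨7, _, w, hGw, rfl⟩, hle⟩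
  have nonempty : values.Nonempty := (near 1 one_pos).imp fun _ hr ↦ hr.1
  refine le_antisymm (le_of_forall_pos_le_add fun δ hδ ↦ ?_) (le_csInf nonempty lower)
  obtain ⟨r, hr, hle⟩ := near δ hδ
  exact (csInf_le ⟨_, lower⟩ hr).trans hle
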